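/- Let N be even with N > 4M − 6. Then there is a nonempty Zariski-open subset of (ℝ^M)^N such that every N-element frame U = (α_0,…,α_{N−1}) on ℝ^M lying in this subset satisfies: for all x, y ∈ ℝ^M, B_U(x) = B_U(y) implies y = x or y = −x, where B_U(x) = ((α_0ᵀx)², (α_1ᵀx)² + (α_{N−1}ᵀx)², …, (α_{N/2−1}ᵀx)² + (α_{N/2+1}ᵀx)², (α_{N/2}ᵀx)²) ∈ ℝ^{N/2+1}. -/

import Mathlib

/-!
STATEMENT 17: For N even with N > 4M−6, a generic N-element frame U = (α_0,…,α_{N−1})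
on ℝ^M satisfies: B_U(x) = B_U(y) implies y = ±x.
-/

open Matrix

noncomputable section

/-- The map B_U : ℝ^M → ℝ^{N/2+1} (N = 2·Nh, frame indexed by ZMod N). -/
def BMap {M N : ℕ} [NeZero N] (Nh : ℕ) (U : ZMod N → (Fin M → ℝ)) (x : Fin M → ℝ) :
    Fin (Nh + 1) → ℝ :=
  fun j =>
    if (j : ℕ) = 0 then (U 0 ⬝ᵥ x) ^ 2
    else if (j : ℕ) = Nh then (U (Nh : ZMod N) ⬝ᵥ x) ^ 2
    else (U ((j : ℕ) : ZMod N) ⬝ᵥ x) ^ 2 + (U (-((j : ℕ) : ZMod N)) ⬝ᵥ x) ^ 2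

/-- A Zariski-open subset of (ℝ^M)^N (tuples indexed mod N). -/
def IsZariskiOpenTuples {M N : ℕ} (W : Set (ZMod N → (Fin M → ℝ))) : Prop :=
  ∃ I : Set (MvPolynomial (ZMod N × Fin M) ℝ),
    W = {α | ∃ p ∈ I, MvPolynomial.eval (fun q => α q.1 q.2) p ≠ 0}

/-!
If the measurements of `x` and `y` agree while `y ≠ ±x`, then `u = x + y` and `v = x - y` are
nonzero and `∑ i, (α_i ⬝ᵥ u) * (α_i ⬝ᵥ v) = 0`, where `i` runs over the indices contributing to
any one measurement. Both `u` and `v` may be rescaled to have a coordinate equal to one. For fixed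
`u` and `v` each of these equations cuts out a hypersurface, covered by finitely many polynomial
parametrizations with one parameter fewer than there are coordinates. Altogether the tuples `U` that
fail to determine `x` up to sign are polynomial functions of `2 (M - 1)` parameters for `u` and `v`
and `M N - (N / 2 + 1)` further ones. This total is less than `M N` exactly when `4 M - 6 < N`, and
then a nonzero polynomial vanishes on all these tuples, because more polynomials than variables are
algebraically dependent.
-/

section Thin

variable {σ ι κ R : Type*} [CommRing R]

/-- A set of points is thin if some nonzero polynomial vanishes on it; over an infinite field this
says that the set is not Zariski dense. -/
def IsThin (S : Set (ι → R)) : Prop :=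
  ∃ P : MvPolynomial ι R, P ≠ 0 ∧ ∀ x ∈ S, MvPolynomial.eval x P = 0

theorem IsThin.mono {S T : Set (ι → R)} (hT : IsThin T) (hST : S ⊆ T) : IsThin S :=
  let ⟨P, hP, hPT⟩ := hT
  ⟨P, hP, fun x hx => hPT x (hST hx)⟩

theorem isThin_iUnion [IsDomain R] [Finite κ] {S : κ → Set (ι → R)} (hS : ∀ k, IsThin (S k)) :
    IsThin (⋃ k, S k) := by
  have := Fintype.ofFinite κ
  choose P hP hPS using hS
  refine ⟨∏ k, P k, Finset.prod_ne_zero_iff.2 fun k _ => hP k, fun x hx => ?_⟩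
  obtain ⟨k, hk⟩ := Set.mem_iUnion.1 hx
  rw [map_prod]
  exact Finset.prod_eq_zero (Finset.mem_univ k) (hPS k x hk)

variable [IsDomain R] [Fintype σ] [Fintype ι]

theorem exists_ne_zero_aeval_eq_zero_of_card_lt (hcard : Fintype.card σ < Fintype.card ι)
    (F : ι → MvPolynomial σ R) : ∃ P : MvPolynomial ι R, P ≠ 0 ∧ MvPolynomial.aeval F P = 0 := by
  by_contra! hne
  have hF : AlgebraicIndependent R F :=
    algebraicIndependent_iff.2 fun P hP => by_contra fun hP0 => hne P hP0 hP
  have hle := hF.lift_cardinalMk_le_trdeg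
  simp only [MvPolynomial.trdeg_of_isDomain, Cardinal.mk_fintype, Cardinal.lift_natCast,
    Nat.cast_le] at hle
  exact hle.not_gt hcard

theorem isThin_range_eval (hcard : Fintype.card σ < Fintype.card ι)
    (F : ι → MvPolynomial σ R) :
    IsThin (Set.range fun (s : σ → R) i => MvPolynomial.eval s (F i)) := by
  obtain ⟨P, hP, hFP⟩ := exists_ne_zero_aeval_eq_zero_of_card_lt hcard F
  refine ⟨P, hP, ?_⟩
  rintro _ ⟨s, rfl⟩
  have heval := congrArg (MvPolynomial.aeval s) hFP
  rwa [map_zero, ← AlgHom.comp_apply, MvPolynomial.comp_aeval] at heval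

theorem isThin_image_eval_of_fixed [Fintype κ]
    (hcard : Fintype.card σ < Fintype.card ι + Fintype.card κ) {φ : κ → σ}
    (hφ : Function.Injective φ) (d : κ → R) (F : ι → MvPolynomial σ R) :
    IsThin ((fun (s : σ → R) i => MvPolynomial.eval s (F i)) '' {s | ∀ k, s (φ k) = d k}) := by
  classical
  let free : Set σ := (Set.range φ)ᶜ
  have hfree : Fintype.card free < Fintype.card ι := by
    have hκ : Fintype.card (Set.range φ) = Fintype.card κ := Set.card_range_of_injective hφ
    have hle := Fintype.card_le_of_injective φ hφ
    rw [Fintype.card_compl_set, hκ]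
    omega
  let fix (t : σ) : MvPolynomial free R :=
    if ht : t ∈ Set.range φ then MvPolynomial.C (d ht.choose) else MvPolynomial.X ⟨t, ht⟩
  refine (isThin_range_eval hfree fun i => MvPolynomial.aeval fix (F i)).mono ?_
  rintro _ ⟨s, hs, rfl⟩
  have hfix : ∀ t, MvPolynomial.aeval (fun r : free => s r) (fix t) = s t := fun t => by
    by_cases ht : t ∈ Set.range φ
    · rw [show fix t = _ from dif_pos ht, MvPolynomial.algHom_C, ← hs, ht.choose_spec]
      rfl
    · rw [show fix t = _ from dif_neg ht, MvPolynomial.aeval_X]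
  refine ⟨fun r => s r, funext fun i => ?_⟩
  simp only [← MvPolynomial.aeval_eq_eval, MvPolynomial.comp_aeval_apply, hfix]

end Thin

section Chart

variable {ι κ n R S K : Type*} [CommRing R] [CommRing S] [Field K]

/-- The projection of `w` along the coordinate vector of `a` to the orthogonal complement of `x`,
for `x` normalized by `x a = 1`. It does not depend on the coordinate `w a`. -/
def orthPart [Fintype n] [DecidableEq n] (a : n) (x w : n → R) : n → R :=
  w - (w ⬝ᵥ x) • Pi.single a 1

theorem comp_orthPart [Fintype n] [DecidableEq n] (f : R →+* S) (a : n) (x w : n → R) :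
    f ∘ orthPart a x w = orthPart a (f ∘ x) (f ∘ w) := by
  funext l
  simp [orthPart, Pi.single_apply, apply_ite f, RingHom.map_dotProduct]

theorem exists_orthPart_eq [Fintype n] [DecidableEq n] {a : n} {x y : n → R} (hx : x a = 1)
    (hy : y ⬝ᵥ x = 0) : ∃ w : n → R, w a = 0 ∧ orthPart a x w = y :=
  ⟨y - y a • Pi.single a 1, by simp, by simp [orthPart, sub_dotProduct, hx, hy]⟩

section skewShear

variable {V : Type*} [AddCommGroup V] [Module R V] [DecidableEq ι]

/-- The action on the family `Y`, at indices in `s`, of the matrix `1 + c e₀ᵀ - e₀ cᵀ`, where `e₀`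
is the coordinate vector of `i₀`. It turns families with `Y i₀` orthogonal to one vector and the
other `Y i` orthogonal to a second vector into solutions of a bilinear equation; over a field in
which `-1` is not a sum of squares the matrix is invertible. -/
def skewShear (s : Finset ι) (i₀ : ι) (c : ι → R) (Y : ι → V) (i : ι) : V :=
  Y i + c i • Y i₀ - if i = i₀ then ∑ k ∈ s, c k • Y k else 0

theorem comp_skewShear (f : R →+* S) (s : Finset ι) (i₀ : ι) (c : ι → R) (Y : ι → n → R)
    (i : ι) :
    f ∘ skewShear s i₀ c Y i = skewShear s i₀ (f ∘ c) (fun k => f ∘ Y k) i := by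
  funext l
  by_cases hi : i = i₀ <;> simp [skewShear, hi]

theorem skewShear_congr {s : Finset ι} {i₀ i : ι} {c c' : ι → R} {Y Y' : ι → V}
    (hi₀ : i₀ ∈ s) (hi : i ∈ s) (hc : ∀ k ∈ s, c k = c' k) (hY : ∀ k ∈ s, Y k = Y' k) :
    skewShear s i₀ c Y i = skewShear s i₀ c' Y' i := by
  have hsum : ∑ k ∈ s, c k • Y k = ∑ k ∈ s, c' k • Y' k :=
    Finset.sum_congr rfl fun k hk => by rw [hc k hk, hY k hk]
  rw [skewShear, skewShear, hsum, hc i hi, hY i hi, hY i₀ hi₀]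

theorem skewShear_single {s : Finset ι} {i₀ : ι} (hi₀ : i₀ ∈ s) (Y : ι → V) :
    skewShear s i₀ (Pi.single i₀ (1 : R)) Y = Y := by
  funext i
  by_cases hi : i = i₀
  · subst hi
    simp [skewShear, Pi.single_apply, hi₀]
  · simp [skewShear, hi]

end skewShear

theorem sum_sq_ne_zero_of_eq_one {R : Type*} [CommSemiring R] [IsSemireal R] {s : Finset ι}
    {c : ι → R} {i₀ : ι} (hi₀ : i₀ ∈ s) (hc : c i₀ = 1) : ∑ i ∈ s, c i ^ 2 ≠ 0 := by
  classical
  rw [← Finset.add_sum_erase s _ hi₀, hc, one_pow]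
  exact IsSemireal.one_add_ne_zero (IsSumSq.sum_sq _ c)

section Hypersurface

variable [Fintype n] [DecidableEq ι] [IsSemireal K] {s : Finset ι} {p : ι → n → K}

theorem exists_skewShear_eq_of_dotProduct_ne_zero {u v : n → K} {i₀ : ι} (hi₀ : i₀ ∈ s)
    (hu : p i₀ ⬝ᵥ u ≠ 0) (huv : ∑ i ∈ s, (p i ⬝ᵥ u) * (p i ⬝ᵥ v) = 0) :
    ∃ (c : ι → K) (Y : ι → n → K), c i₀ = 1 ∧ Y i₀ ⬝ᵥ v = 0 ∧
      (∀ i, i ≠ i₀ → Y i ⬝ᵥ u = 0) ∧ skewShear s i₀ c Y = p := by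
  let c : ι → K := fun i => (p i ⬝ᵥ u) / (p i₀ ⬝ᵥ u)
  have hcu : ∀ i, p i ⬝ᵥ u = c i * (p i₀ ⬝ᵥ u) := fun i => (div_mul_cancel₀ _ hu).symm
  have hc : c i₀ = 1 := div_self hu
  have hS := sum_sq_ne_zero_of_eq_one hi₀ hc
  -- With weights proportional to `p i ⬝ᵥ u`, the hypothesis makes the average orthogonal to `v`.
  let q : n → K := (∑ i ∈ s, c i ^ 2)⁻¹ • ∑ i ∈ s, c i • p i
  have hSq : (∑ i ∈ s, c i ^ 2) • q = ∑ i ∈ s, c i • p i := smul_inv_smul₀ hS _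
  have hqv : q ⬝ᵥ v = 0 := by
    have hcv : (p i₀ ⬝ᵥ u) * ∑ i ∈ s, c i * (p i ⬝ᵥ v) = 0 := by
      rw [Finset.mul_sum, ← huv]
      exact Finset.sum_congr rfl fun i _ => by rw [hcu i]; ring
    simp [q, sum_dotProduct, (mul_eq_zero.1 hcv).resolve_left hu]
  have hqu : q ⬝ᵥ u = p i₀ ⬝ᵥ u := by
    have hcu' : (∑ i ∈ s, c i • p i) ⬝ᵥ u = (∑ i ∈ s, c i ^ 2) * (p i₀ ⬝ᵥ u) := by
      rw [sum_dotProduct, Finset.sum_mul]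
      exact Finset.sum_congr rfl fun i _ => by rw [smul_dotProduct, hcu i, smul_eq_mul]; ring
    rw [smul_dotProduct, hcu', smul_eq_mul, inv_mul_cancel_left₀ hS]
  -- `∑ c i • (p i - c i • q)` vanishes, so only the correction at `i₀`, where `c i₀ = 1`,
  -- contributes to the sum in `skewShear`.
  let Y : ι → n → K := fun i => p i - c i • q + if i = i₀ then q + q - p i else 0
  have hY₀ : Y i₀ = q := by simp [Y, hc]
  have hY : ∀ i, i ≠ i₀ → Y i = p i - c i • q := fun i hi => by simp [Y, hi]
  have hsum : ∑ k ∈ s, c k • Y k = q + q - p i₀ := by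
    simp [Y, smul_sub, Finset.sum_add_distrib, smul_smul, ← sq, ← Finset.sum_smul, hSq, hi₀, hc]
  refine ⟨c, Y, hc, hY₀ ▸ hqv, fun i hi => ?_, funext fun i => ?_⟩
  · rw [hY i hi, sub_dotProduct, smul_dotProduct, hqu, smul_eq_mul, hcu i, sub_self]
  · rcases eq_or_ne i i₀ with rfl | hi
    · simp [skewShear, hsum, hY₀, hc]
    · simp [skewShear, hY₀, hY i hi, hi]

theorem exists_skewShear_eq (hs : s.Nonempty) (x : Bool → n → K)
    (hx : ∑ i ∈ s, (p i ⬝ᵥ x false) * (p i ⬝ᵥ x true) = 0) :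
    ∃ i₀ ∈ s, ∃ (e : Bool) (c : ι → K) (Y : ι → n → K), c i₀ = 1 ∧ Y i₀ ⬝ᵥ x e = 0 ∧
      (∀ i ∈ s, i ≠ i₀ → Y i ⬝ᵥ x (!e) = 0) ∧ skewShear s i₀ c Y = p := by
  by_cases hzero : ∀ e, ∀ i ∈ s, p i ⬝ᵥ x e = 0
  · obtain ⟨i₀, hi₀⟩ := hs
    exact ⟨i₀, hi₀, true, Pi.single i₀ 1, p, by simp, hzero _ _ hi₀, fun i hi _ => hzero _ i hi,
      skewShear_single hi₀ p⟩
  · push Not at hzero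
    obtain ⟨e, i₀, hi₀, he⟩ := hzero
    have hx' : ∑ i ∈ s, (p i ⬝ᵥ x e) * (p i ⬝ᵥ x (!e)) = 0 := by
      cases e
      · exact hx
      · simpa only [mul_comm, Bool.not_true] using hx
    obtain ⟨c, Y, hc, hYv, hYu, hY⟩ := exists_skewShear_eq_of_dotProduct_ne_zero hi₀ he hx'
    exact ⟨i₀, hi₀, !e, c, Y, hc, hYv, fun i _ hi => by simpa using hYu i hi, hY⟩

end Hypersurface

variable [Fintype ι] [Fintype n] [DecidableEq ι] [DecidableEq κ] [DecidableEq n]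

/-- Given a pivot `g j` and one of two vectors, labelled `e j`, for each fibre of `π`: the label of
the vector to which the parameter at `i` is orthogonal. It is the chosen one at the pivot and the
other one elsewhere. -/
def chartSide (π : ι → κ) (g : κ → ι) (e : κ → Bool) (i : ι) : Bool :=
  if i = g (π i) then e (π i) else !e (π i)

/-- A polynomial parametrization of tuples `U` whose fibres over `π` satisfy
`∑ i, (U i ⬝ᵥ x false) * (U i ⬝ᵥ x true) = 0`. It is used for parameters normalized by
`x b (a b) = 1`, `w i (a (chartSide π g e i)) = 0` and `c (g j) = 1`. -/
def chart (π : ι → κ) (a : Bool → n) (g : κ → ι) (e : κ → Bool) (x : Bool → n → R)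
    (w : ι → n → R) (c : ι → R) (i : ι) : n → R :=
  skewShear {k | π k = π i} (g (π i)) c
    (fun k => orthPart (a (chartSide π g e k)) (x (chartSide π g e k)) (w k)) i

variable {π : ι → κ} {a : Bool → n} {g : κ → ι} {e : κ → Bool}

theorem comp_chart (f : R →+* S) (x : Bool → n → R) (w : ι → n → R) (c : ι → R) (i : ι) :
    f ∘ chart π a g e x w c i =
      chart π a g e (fun b => f ∘ x b) (fun k => f ∘ w k) (f ∘ c) i := by
  simp only [chart, comp_skewShear, comp_orthPart]

theorem isThin_chart [Fintype κ] [IsDomain R] (hg : ∀ j, π (g j) = j)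
    (hcard : 2 * Fintype.card n < Fintype.card κ + 2) :
    IsThin {p : ι × n → R | ∃ (x : Bool → n → R) (w : ι → n → R) (c : ι → R),
      (∀ b, x b (a b) = 1) ∧ (∀ i, w i (a (chartSide π g e i)) = 0) ∧ (∀ j, c (g j) = 1) ∧
        p = Function.uncurry (chart π a g e x w c)} := by
  let F : ι × n → MvPolynomial ((Bool × n) ⊕ (ι × n) ⊕ ι) R :=
    Function.uncurry <| chart π a g e (fun b l => .X (.inl (b, l)))
      (fun i l => .X (.inr (.inl (i, l)))) (fun i => .X (.inr (.inr i)))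
  let φ : Bool ⊕ ι ⊕ κ → (Bool × n) ⊕ (ι × n) ⊕ ι :=
    Sum.map (fun b => (b, a b)) (Sum.map (fun i => (i, a (chartSide π g e i))) g)
  have hφ : Function.Injective φ :=
    Sum.map_injective.2 ⟨fun _ _ h => (Prod.ext_iff.1 h).1,
      Sum.map_injective.2 ⟨fun _ _ h => (Prod.ext_iff.1 h).1, Function.LeftInverse.injective hg⟩⟩
  refine (isThin_image_eval_of_fixed ?_ hφ (Sum.elim 1 (Sum.elim 0 1)) F).mono ?_
  · simp only [Fintype.card_sum, Fintype.card_prod, Fintype.card_bool]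
    omega
  · rintro _ ⟨x, w, c, hx, hw, hc, rfl⟩
    let s := Sum.elim (Function.uncurry x) (Sum.elim (Function.uncurry w) c)
    refine ⟨s, ?_, funext fun q => ?_⟩
    · rintro (b | i | j)
      exacts [hx b, hw i, hc j]
    · have hFs : MvPolynomial.eval s (F q) = _ := congrFun (comp_chart _ _ _ _ q.1) q.2
      simpa [s, Function.comp_def, Function.uncurry_def] using hFs

theorem exists_chart_eq [IsSemireal K] (hπ : Function.Surjective π) {U : ι → n → K}
    {x : Bool → n → K} (hx : ∀ b, x b (a b) = 1)
    (hU : ∀ j, ∑ i with π i = j, (U i ⬝ᵥ x false) * (U i ⬝ᵥ x true) = 0) :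
    ∃ (g : κ → ι) (e : κ → Bool) (w : ι → n → K) (c : ι → K), (∀ j, π (g j) = j) ∧
      (∀ i, w i (a (chartSide π g e i)) = 0) ∧ (∀ j, c (g j) = 1) ∧
        U = chart π a g e x w c := by
  have hfib : ∀ j, ({i | π i = j} : Finset ι).Nonempty := fun j =>
    (hπ j).imp fun i hi => by simpa using hi
  choose g hg e c Y hc hpivot hoff hY using fun j => exists_skewShear_eq (hfib j) x (hU j)
  simp only [Finset.mem_filter_univ] at hg hoff
  have horth : ∀ i, Y (π i) i ⬝ᵥ x (chartSide π g e i) = 0 := fun i => by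
    by_cases hi : i = g (π i)
    · have hYi := hpivot (π i)
      rw [← hi] at hYi
      rwa [chartSide, if_pos hi]
    · rw [chartSide, if_neg hi]
      exact hoff _ i rfl hi
  choose w hw hwY using fun i => exists_orthPart_eq (hx (chartSide π g e i)) (horth i)
  refine ⟨g, e, w, fun i => c (π i) i, hg, hw, fun j => by simp only [hg, hc],
    funext fun i => ?_⟩
  rw [← congrFun (hY (π i)) i]
  refine skewShear_congr (by simp [hg]) (by simp) (fun k hk => ?_) fun k hk => ?_
  · rw [(Finset.mem_filter_univ k).1 hk]
  · rw [hwY, (Finset.mem_filter_univ k).1 hk]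

end Chart

section Generic

theorem sum_dotProduct_add_mul_dotProduct_sub {ι n R : Type*} [Fintype n] [CommRing R]
    (s : Finset ι) (U : ι → n → R) (x y : n → R) :
    ∑ i ∈ s, (U i ⬝ᵥ (x + y)) * (U i ⬝ᵥ (x - y)) =
      ∑ i ∈ s, (U i ⬝ᵥ x) ^ 2 - ∑ i ∈ s, (U i ⬝ᵥ y) ^ 2 := by
  simp only [dotProduct_add, dotProduct_sub, ← sq_sub_sq, Finset.sum_sub_distrib]

variable {K : Type*} [Field K] [IsSemireal K] {ι κ n : Type*} [Fintype ι] [Fintype κ] [Fintype n]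
  [DecidableEq κ] {π : ι → κ}

theorem isThin_exists_sum_dotProduct_mul_dotProduct_eq_zero (hπ : Function.Surjective π)
    (hcard : 2 * Fintype.card n < Fintype.card κ + 2) :
    IsThin {p : ι × n → K | ∃ u v : n → K, u ≠ 0 ∧ v ≠ 0 ∧
      ∀ j, ∑ i with π i = j, (Function.curry p i ⬝ᵥ u) * (Function.curry p i ⬝ᵥ v) = 0} := by
  classical
  refine (isThin_iUnion fun t : (Bool → n) × {g : κ → ι // ∀ j, π (g j) = j} × (κ → Bool) =>
    isThin_chart (R := K) (a := t.1) (e := t.2.2) t.2.1.2 hcard).mono ?_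
  rintro p ⟨u, v, hu, hv, huv⟩
  obtain ⟨k, hk⟩ := Function.ne_iff.1 hu
  obtain ⟨l, hl⟩ := Function.ne_iff.1 hv
  let a : Bool → n := fun b => bif b then l else k
  let x : Bool → n → K := fun b => bif b then (v l)⁻¹ • v else (u k)⁻¹ • u
  have hx : ∀ b, x b (a b) = 1 := Bool.forall_bool.2 ⟨inv_mul_cancel₀ hk, inv_mul_cancel₀ hl⟩
  have hpx : ∀ j, ∑ i with π i = j,
      (Function.curry p i ⬝ᵥ x false) * (Function.curry p i ⬝ᵥ x true) = 0 := fun j => by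
    simp only [x, cond_false, cond_true, dotProduct_smul, smul_mul_smul_comm, ← Finset.smul_sum,
      huv j, smul_zero]
  obtain ⟨g, e, w, c, hg, hw, hc, hp⟩ := exists_chart_eq hπ hx hpx
  rw [← Function.uncurry_curry p, hp]
  exact Set.mem_iUnion.2 ⟨(a, ⟨g, hg⟩, e), x, w, c, hx, hw, hc, rfl⟩

theorem generic_frame_real_general (hπ : Function.Surjective π)
    (hcard : 2 * Fintype.card n < Fintype.card κ + 2) :
    ∃ P : MvPolynomial (ι × n) K, P ≠ 0 ∧
      ∀ U : ι → n → K, MvPolynomial.eval (Function.uncurry U) P ≠ 0 → ∀ x y : n → K,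
        (∀ j, ∑ i with π i = j, (U i ⬝ᵥ x) ^ 2 = ∑ i with π i = j, (U i ⬝ᵥ y) ^ 2) →
          y = x ∨ y = -x := by
  obtain ⟨P, hP, hbad⟩ :=
    isThin_exists_sum_dotProduct_mul_dotProduct_eq_zero (K := K) hπ hcard
  refine ⟨P, hP, fun U hU x y hxy => ?_⟩
  by_contra! hne
  refine hU (hbad _ ⟨x + y, x - y, fun h => hne.2 (eq_neg_of_add_eq_zero_right h),
    fun h => hne.1 (sub_eq_zero.1 h).symm, fun j => ?_⟩)
  rw [Function.curry_uncurry, sum_dotProduct_add_mul_dotProduct_sub, hxy j, sub_self]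

end Generic

section ZariskiOpen

variable {M N : ℕ}

theorem isZariskiOpenTuples_eval_ne_zero (P : MvPolynomial (ZMod N × Fin M) ℝ) :
    IsZariskiOpenTuples {U | MvPolynomial.eval (Function.uncurry U) P ≠ 0} :=
  ⟨{P}, by simp [Function.uncurry_def]⟩

theorem exists_eval_uncurry_ne_zero {ι n R : Type*} [CommRing R] [IsDomain R] [Infinite R]
    {P : MvPolynomial (ι × n) R} (hP : P ≠ 0) :
    ∃ U : ι → n → R, MvPolynomial.eval (Function.uncurry U) P ≠ 0 := by
  contrapose! hP
  refine MvPolynomial.funext fun s => ?_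
  rw [map_zero, ← Function.uncurry_curry s, hP]

end ZariskiOpen

section Fold

variable {n : ℕ}

theorem natCast_eq_neg_iff {k : ℕ} (hk : k ≤ n) :
    (k : ZMod (2 * n)) = -k ↔ k = 0 ∨ k = n := by
  rw [eq_neg_iff_add_eq_zero, ← Nat.cast_add, ZMod.natCast_eq_zero_iff, ← two_mul,
    Nat.mul_dvd_mul_iff_left two_pos]
  constructor
  · intro h
    rcases Nat.eq_zero_or_pos k with h0 | h0
    · exact .inl h0
    · exact .inr (hk.antisymm (Nat.le_of_dvd h0 h))
  · rintro (rfl | rfl) <;> simp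

variable [NeZero (2 * n)]

/-- The index of the measurement of `BMap` to which the frame vector `i` contributes: `i` and `-i`
contribute to the same one. -/
def foldIndex (i : ZMod (2 * n)) : Fin (n + 1) :=
  ⟨i.valMinAbs.natAbs, Nat.lt_succ_of_le (by simpa using i.natAbs_valMinAbs_le)⟩

theorem foldIndex_eq_iff {i : ZMod (2 * n)} {j : Fin (n + 1)} :
    foldIndex i = j ↔ i = (j : ℕ) ∨ i = -(j : ℕ) := by
  have hj : ((j : ℕ) : ZMod (2 * n)).valMinAbs.natAbs = j := by
    rw [ZMod.valMinAbs_natCast_of_le_half (by omega), Int.natAbs_natCast]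
  rw [← ZMod.natAbs_valMinAbs_eq_natAbs_valMinAbs, hj, Fin.ext_iff, foldIndex]

theorem foldIndex_surjective : Function.Surjective (foldIndex (n := n)) := fun j =>
  ⟨(j : ℕ), foldIndex_eq_iff.2 (.inl rfl)⟩

theorem BMap_eq_sum_foldIndex {M : ℕ} (U : ZMod (2 * n) → Fin M → ℝ) (x : Fin M → ℝ)
    (j : Fin (n + 1)) : BMap n U x j = ∑ i with foldIndex i = j, (U i ⬝ᵥ x) ^ 2 := by
  have hfiber : ({i | foldIndex i = j} : Finset (ZMod (2 * n))) =
      {((j : ℕ) : ZMod (2 * n)), -((j : ℕ) : ZMod (2 * n))} := by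
    ext i
    simp [foldIndex_eq_iff]
  have hself := natCast_eq_neg_iff (n := n) (Nat.lt_succ_iff.1 j.isLt)
  rw [hfiber]
  by_cases hj : (j : ℕ) = 0 ∨ (j : ℕ) = n
  · rw [← hself.2 hj, Finset.pair_eq_singleton, Finset.sum_singleton, BMap]
    rcases hj with hj | hj <;> simp +contextual [hj]
  · rw [Finset.sum_pair (mt hself.1 hj), BMap, if_neg (not_or.1 hj).1, if_neg (not_or.1 hj).2]

end Fold

/-- If N is even and N > 4M−6 then there is a nonempty Zariski-open subset of (ℝ^M)^N
such that every frame in it has the sign-recovery property for B_U. -/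
theorem generic_frame_real (M N Nh : ℕ) [NeZero N] (hN : N = 2 * Nh) (hNh : 0 < Nh)
    (h : (N : ℤ) > 4 * (M : ℤ) - 6) :
    ∃ W : Set (ZMod N → (Fin M → ℝ)),
      IsZariskiOpenTuples W ∧ W.Nonempty ∧
      ∀ U ∈ W, Submodule.span ℝ (Set.range U) = ⊤ →
        ∀ x y : Fin M → ℝ, BMap Nh U x = BMap Nh U y → (y = x ∨ y = -x) := by
  subst hN
  obtain ⟨P, hP, hU⟩ := generic_frame_real_general (K := ℝ) (n := Fin M)
    (foldIndex_surjective (n := Nh)) (by simp only [Fintype.card_fin]; omega)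
  refine ⟨{U | MvPolynomial.eval (Function.uncurry U) P ≠ 0}, isZariskiOpenTuples_eval_ne_zero P,
    exists_eval_uncurry_ne_zero hP, fun U hUP _ x y hxy => hU U hUP x y fun j => ?_⟩
  simpa only [BMap_eq_sum_foldIndex] using congrFun hxy j
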